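/- arXiv:2204.05277 — 2 statements merged into one kernel-verified Lean document; each statement's English description precedes it below -/
import Mathlib

section
/- There exists a binary sequence x ∈ {0,1}^ℕ that is normal in base 2 but not typical; i.e. the set Normal ∖ TpcN is nonempty. -/
open Filter

open Classical in
/-- `L_n(x)`: the maximal length of a run of consecutive ones among the first `n`
digits (positions `1,…,n`) of the binary sequence `x`. -/
noncomputable def runL (x : ℕ → Bool) (n : ℕ) : ℕ :=
  Nat.findGreatest
    (fun j => ∃ i, i + j ≤ n ∧ ∀ k, 1 ≤ k → k ≤ j → x (i + k) = true) n

/-- A binary sequence is typical if `L_n(x)/log₂ n → 1`. -/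
def Typical (x : ℕ → Bool) : Prop :=
  Tendsto (fun n : ℕ => (runL x n : ℝ) / Real.logb 2 (n : ℝ)) atTop (nhds 1)

/-- `N(x, w, n)`: the number of occurrences of the block `w` in `x` starting at
a position `i` with `1 ≤ i ≤ n`. -/
def occCount (x : ℕ → Bool) (w : List Bool) (n : ℕ) : ℕ :=
  ((Finset.Icc 1 n).filter
    (fun i => ∀ k ∈ Finset.range w.length, x (i + k) = w.getD k false)).card

/-- A binary sequence is normal in base 2 if every nonempty block `w` appears
with frequency `2^{-|w|}`. -/
def NormalBaseTwo (x : ℕ → Bool) : Prop :=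
  ∀ w : List Bool, w ≠ [] →
    Tendsto (fun n : ℕ => (occCount x w n : ℝ) / (n : ℝ)) atTop
      (nhds (1 / 2 ^ w.length))

lemma aux_sum_residue (f : ℕ → ℝ) (m q : ℕ) :
    ∑ i ∈ Finset.range (m * q), f i
      = ∑ r ∈ Finset.range m, ∑ j ∈ Finset.range q, f (r + m * j) := by
  induction q with
  | zero => simp
  | succ q ih =>
    rw [Nat.mul_succ, Finset.sum_range_add, ih, ← Finset.sum_add_distrib]
    refine Finset.sum_congr rfl fun r _ => ?_
    rw [Finset.sum_range_succ, add_comm (m * q) r]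

lemma aux_inv_nat : Tendsto (fun n : ℕ => ((n : ℝ))⁻¹) atTop (nhds 0) :=
  tendsto_inv_atTop_zero.comp tendsto_natCast_atTop_atTop

lemma aux_avg (f : ℕ → ℝ) (h0 : ∀ i, 0 ≤ f i) (h1 : ∀ i, f i ≤ 1) (m : ℕ) (hm : 0 < m) (c : ℝ)
    (h : ∀ r, Tendsto (fun n : ℕ => (∑ j ∈ Finset.range n, f (r + m * j)) / n) atTop (nhds c)) :
    Tendsto (fun n : ℕ => (∑ i ∈ Finset.range n, f i) / (n : ℝ)) atTop (nhds c) := by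
  have hm' : (0 : ℝ) < m := by exact_mod_cast hm
  have hT : Tendsto (fun q : ℕ => (∑ i ∈ Finset.range (m * q), f i) / (q : ℝ)) atTop
      (nhds (m * c)) := by
    have := tendsto_finsetSum (Finset.range m) (fun r _ => h r)
    simp only [Finset.sum_const, Finset.card_range, nsmul_eq_mul] at this
    refine this.congr fun q => ?_
    rw [aux_sum_residue, Finset.sum_div]
  have hdiv : Tendsto (fun n : ℕ => n / m) atTop atTop := Nat.tendsto_div_const_atTop hm.ne'
  have hT2 := hT.comp hdiv
  have hmod : Tendsto (fun n : ℕ => ((n % m : ℕ) : ℝ) / n) atTop (nhds 0) := by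
    refine squeeze_zero (g := fun n : ℕ => (m : ℝ) * (n : ℝ)⁻¹) (fun n => by positivity)
      (fun n => ?_) ?_
    · rw [div_eq_mul_inv]
      gcongr
      exact (Nat.mod_lt _ hm).le
    · simpa using aux_inv_nat.const_mul (m : ℝ)
  have hq : Tendsto (fun n : ℕ => ((n / m : ℕ) : ℝ) / n) atTop (nhds (1 / m)) := by
    have := (hmod.const_sub 1).div_const (m : ℝ)
    simp only [sub_zero] at this
    refine this.congr' ?_
    filter_upwards [eventually_gt_atTop 0] with n hn
    have hn' : (0 : ℝ) < n := by exact_mod_cast hn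
    have e : (m : ℝ) * ((n / m : ℕ) : ℝ) + ((n % m : ℕ) : ℝ) = n := by
      exact_mod_cast Nat.div_add_mod n m
    field_simp
    linarith
  have he : Tendsto (fun n : ℕ => (∑ k ∈ Finset.range (n % m), f (m * (n / m) + k)) / (n : ℝ))
      atTop (nhds 0) := by
    refine squeeze_zero (fun n => ?_) (fun n => ?_) hmod
    · exact div_nonneg (Finset.sum_nonneg fun i _ => h0 _) (by positivity)
    · gcongr
      calc _ ≤ ∑ k ∈ Finset.range (n % m), (1 : ℝ) := Finset.sum_le_sum fun i _ => h1 _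
        _ = _ := by simp
  have hfin := (hT2.mul hq).add he
  have : (m : ℝ) * c * (1 / m) + 0 = c := by field_simp; ring
  rw [this] at hfin
  refine hfin.congr' ?_
  filter_upwards [eventually_ge_atTop m] with n hn
  have hqp : 0 < n / m := Nat.div_pos hn hm
  have hqp' : (0 : ℝ) < ((n / m : ℕ) : ℝ) := by exact_mod_cast hqp
  have hn' : (0 : ℝ) < n := by exact_mod_cast lt_of_lt_of_le hm hn
  have hs : ∑ i ∈ Finset.range n, f i = ∑ i ∈ Finset.range (m * (n / m)), f i
      + ∑ k ∈ Finset.range (n % m), f (m * (n / m) + k) := by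
    rw [← Finset.sum_range_add, Nat.div_add_mod]
  rw [hs]
  simp only [Function.comp]
  field_simp

/-- indicator that the block `w` occurs in `x` at position `i`. -/
noncomputable def auxInd (w : List Bool) (i : ℕ) (x : ℕ → Bool) : ℝ :=
  if ∀ k ∈ Finset.range w.length, x (i + k) = w.getD k false then 1 else 0

lemma aux_occ (x : ℕ → Bool) (w : List Bool) (n : ℕ) :
    (occCount x w n : ℝ) = ∑ i ∈ Finset.range n, auxInd w (i + 1) x := by
  unfold occCount auxInd
  rw [Finset.card_filter]
  push_cast
  have h := Finset.sum_Ico_add' (fun i => if ∀ k ∈ Finset.range w.length,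
    x (i + k) = w.getD k false then (1:ℝ) else 0) 0 n 1
  rw [Nat.Ico_zero_eq_range] at h
  rw [h]
  rfl

open MeasureTheory ProbabilityTheory

noncomputable def auxCoin : Measure Bool := uniformOn Set.univ

instance : IsProbabilityMeasure auxCoin := by unfold auxCoin; infer_instance

noncomputable def auxP : Measure (ℕ → Bool) := Measure.infinitePi (fun _ => auxCoin)

instance : IsProbabilityMeasure auxP := by unfold auxP; infer_instance

lemma aux_coin_single (b : Bool) : auxCoin {b} = 2⁻¹ := by
  rw [auxCoin, uniformOn_univ]
  simp

/-- the test function on windows -/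
noncomputable def auxG (w : List Bool) (v : Fin w.length → Bool) : ℝ :=
  if v = (fun k : Fin w.length => w.getD (k : ℕ) false) then 1 else 0

lemma auxInd_eq (w : List Bool) (i : ℕ) (x : ℕ → Bool) :
    auxInd w i x = auxG w (fun k : Fin w.length => x (i + k)) := by
  unfold auxInd auxG
  congr 1
  rw [eq_iff_iff, funext_iff]
  constructor
  · intro h k
    exact h k (Finset.mem_range.2 k.2)
  · intro h k hk
    exact h ⟨k, Finset.mem_range.1 hk⟩

lemma aux_map (m i : ℕ) : auxP.map (fun (x : ℕ → Bool) (k : Fin m) => x (i + k))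
    = Measure.infinitePi (fun _ : Fin m => auxCoin) := by
  unfold auxP
  exact Measure.map_infinitePi_infinitePi_of_inj (P := fun _ : ℕ => auxCoin)
    (f := fun k : Fin m => i + (k : ℕ)) (fun a b h => Fin.ext (by simpa using h))

lemma aux_integral (w : List Bool) (i : ℕ) : ∫ x, auxInd w i x ∂auxP = 1 / 2 ^ w.length := by
  simp only [auxInd_eq]
  rw [← integral_map (φ := fun (x : ℕ → Bool) (k : Fin w.length) => x (i + k)) (f := auxG w)
    (measurable_pi_lambda _ fun k => measurable_pi_apply _).aemeasurable
    (by exact (measurable_of_finite _).aestronglyMeasurable), aux_map,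
    Measure.infinitePi_eq_pi]
  have : auxG w = Set.indicator {fun k : Fin w.length => w.getD (k : ℕ) false} (fun _ => (1:ℝ)) := by
    ext v
    simp [auxG, Set.indicator]
  rw [this, integral_indicator_const _ (measurableSet_singleton _), Measure.real,
    Measure.pi_singleton]
  simp [aux_coin_single]

lemma aux_slln (w : List Bool) (hw : w ≠ []) (r : ℕ) :
    ∀ᵐ x ∂auxP, Tendsto (fun n : ℕ => (∑ j ∈ Finset.range n,
      auxInd w (r + w.length * j + 1) x) / n) atTop (nhds (1 / 2 ^ w.length)) := by
  have hl : 0 < w.length := List.length_pos_iff.2 hw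
  have hgm : Measurable (auxG w) := measurable_of_finite _
  have hwm : ∀ i : ℕ, Measurable (fun (x : ℕ → Bool) (k : Fin w.length) => x (i + k)) :=
    fun i => measurable_pi_lambda _ fun k => measurable_pi_apply _
  have hmeas : ∀ i, Measurable (auxInd w i) := fun i => by
    have : auxInd w i = auxG w ∘ (fun (x : ℕ → Bool) (k : Fin w.length) => x (i + k)) := by
      ext x; exact auxInd_eq w i x
    rw [this]
    exact hgm.comp (hwm i)
  have := strong_law_ae_real (μ := auxP) (fun j => auxInd w (r + w.length * j + 1)) ?_ ?_ ?_
  · simpa only [aux_integral] using this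
  · refine Integrable.of_bound (hmeas _).aestronglyMeasurable 1 (Eventually.of_forall fun x => ?_)
    unfold auxInd
    split_ifs <;> simp
  · intro j j' hjj
    have hind : iIndepFun (fun (i : ℕ) (x : ℕ → Bool) => x i) auxP :=
      iIndepFun_infinitePi (P := fun _ : ℕ => auxCoin) (X := fun _ ω => ω) (by fun_prop)
    let S : ℕ → Finset ℕ := fun j =>
      Finset.Ico (r + w.length * j + 1) (r + w.length * j + 1 + w.length)
    have hdis : Disjoint (S j) (S j') := by
      rw [Finset.disjoint_left]
      intro a ha hb
      simp only [S, Finset.mem_Ico] at ha hb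
      rcases lt_or_gt_of_ne hjj with h | h
      · have : w.length * (j + 1) ≤ w.length * j' := Nat.mul_le_mul_left _ h
        rw [Nat.mul_succ] at this
        omega
      · have : w.length * (j' + 1) ≤ w.length * j := Nat.mul_le_mul_left _ h
        rw [Nat.mul_succ] at this
        omega
    have hI := hind.indepFun_finset (S j) (S j') hdis (fun i => measurable_pi_apply i)
    let φ : ∀ j, (S j → Bool) → ℝ := fun j v =>
      auxG w (fun k => v ⟨r + w.length * j + 1 + k, by simp [S]⟩)
    have hc := hI.comp (φ := φ j) (ψ := φ j') (measurable_of_finite _) (measurable_of_finite _)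
    have key : ∀ j, auxInd w (r + w.length * j + 1)
        = φ j ∘ (fun (a : ℕ → Bool) (i : S j) => a i) := by
      intro j; ext x; exact auxInd_eq _ _ _
    show IndepFun (auxInd w (r + w.length * j + 1)) (auxInd w (r + w.length * j' + 1)) auxP
    rw [key, key]
    exact hc
  · intro j
    have : IdentDistrib (fun (x : ℕ → Bool) (k : Fin w.length) => x (r + w.length * j + 1 + k))
      (fun (x : ℕ → Bool) (k : Fin w.length) => x (r + w.length * 0 + 1 + k)) auxP auxP :=
      ⟨(hwm _).aemeasurable, (hwm _).aemeasurable, by rw [aux_map, aux_map]⟩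
    have h2 := this.comp hgm
    have key : ∀ j, auxInd w (r + w.length * j + 1)
        = auxG w ∘ (fun (x : ℕ → Bool) (k : Fin w.length) => x (r + w.length * j + 1 + k)) := by
      intro j; ext x; exact auxInd_eq _ _ _
    simp only [key]
    exact h2

lemma aux_exists_normal : ∃ x : ℕ → Bool, NormalBaseTwo x := by
  have h : ∀ᵐ x ∂auxP, ∀ w : List Bool, ∀ r : ℕ, w ≠ [] →
      Tendsto (fun n : ℕ => (∑ j ∈ Finset.range n,
      auxInd w (r + w.length * j + 1) x) / n) atTop (nhds (1 / 2 ^ w.length)) := by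
    rw [ae_all_iff]
    intro w
    rw [ae_all_iff]
    intro r
    by_cases hw : w = []
    · simp [hw]
    · filter_upwards [aux_slln w hw r] with x hx _ using hx
  obtain ⟨x, hx⟩ := h.exists
  refine ⟨x, fun w hw => ?_⟩
  simp only [aux_occ]
  refine aux_avg (fun i => auxInd w (i + 1) x) ?_ ?_ w.length (List.length_pos_iff.2 hw) _
    (fun r => hx w r hw)
  · intro i; simp only [auxInd]; split_ifs <;> simp
  · intro i; simp only [auxInd]; split_ifs <;> simp

/-- the modified sequence -/
def auxY (x : ℕ → Bool) (i : ℕ) : Bool :=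
  x i || decide (i ≤ 2 ^ Nat.log 2 i + 2 * Nat.log 2 i)

lemma aux_not_typical (x : ℕ → Bool) : ¬ Typical (auxY x) := by
  intro h
  have hev := h.eventually (gt_mem_nhds (show (1 : ℝ) < 3 / 2 by norm_num))
  rw [eventually_atTop] at hev
  obtain ⟨N, hN⟩ := hev
  set k := N + 3 with hk
  have hlt : 2 * k < 2 ^ k := by
    have : ∀ t : ℕ, 2 * (t + 3) < 2 ^ (t + 3) := by
      intro t
      induction t with
      | zero => norm_num
      | succ t ih => rw [show t + 1 + 3 = (t + 3) + 1 by ring, pow_succ]; omega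
    exact this N
  have hb := hN (2 ^ k + 2 * k) (by omega)
  have hrun : 2 * k ≤ runL (auxY x) (2 ^ k + 2 * k) := by
    unfold runL
    classical
    refine Nat.le_findGreatest (by omega) ⟨2 ^ k, le_rfl, fun t h1 h2 => ?_⟩
    have hlog : Nat.log 2 (2 ^ k + t) = k := by
      rw [Nat.log_eq_iff (by right; constructor <;> omega)]
      rw [pow_succ 2 k]
      omega
    simp only [auxY, hlog]
    rw [decide_eq_true (by omega)]
    simp
  have hlogb : Real.logb 2 ((2 ^ k + 2 * k : ℕ) : ℝ) ≤ k + 1 := by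
    rw [Real.logb_le_iff_le_rpow (by norm_num) (by positivity)]
    have : (2 ^ k + 2 * k : ℕ) ≤ 2 ^ (k + 1) := by rw [pow_succ 2 k]; omega
    calc ((2 ^ k + 2 * k : ℕ) : ℝ) ≤ ((2 ^ (k + 1) : ℕ) : ℝ) := by exact_mod_cast this
      _ = _ := by
        push_cast
        rw [← Real.rpow_natCast]
        push_cast
        rfl
  have hpos : 0 < Real.logb 2 ((2 ^ k + 2 * k : ℕ) : ℝ) := by
    apply Real.logb_pos (by norm_num)
    have : 1 < 2 ^ k + 2 * k := by omega
    exact_mod_cast this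
  rw [div_lt_iff₀ hpos] at hb
  have h1 : (2 * k : ℝ) ≤ (runL (auxY x) (2 ^ k + 2 * k) : ℝ) := by exact_mod_cast hrun
  have h2 : (3 : ℝ) ≤ k := by rw [hk]; push_cast; linarith [Nat.cast_nonneg (α := ℝ) N]
  linarith

lemma aux_diff (x : ℕ → Bool) (w : List Bool) (n : ℕ) (hn : w.length ≤ n) (h1 : 1 ≤ n) :
    |(occCount (auxY x) w n : ℝ) - occCount x w n|
      ≤ w.length * (6 * (Nat.log 2 n + 1 : ℝ) ^ 2) := by
  set L := Nat.log 2 n with hL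
  let B : Finset ℕ := (Finset.range (L + 2) ×ˢ Finset.range (2 * L + 3) ×ˢ
    Finset.range w.length).image (fun p => 2 ^ p.1 + p.2.1 - p.2.2)
  have hB : B.card ≤ (L + 2) * ((2 * L + 3) * w.length) := by
    refine Finset.card_image_le.trans ?_
    simp [Finset.card_product]
  have hagree : ∀ i ∈ Finset.Icc 1 n, i ∉ B → ∀ k ∈ Finset.range w.length,
      auxY x (i + k) = x (i + k) := by
    intro i hi hiB k hk
    by_contra hne
    apply hiB
    have hd : i + k ≤ 2 ^ Nat.log 2 (i + k) + 2 * Nat.log 2 (i + k) := by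
      by_contra hc
      apply hne
      unfold auxY
      rw [decide_eq_false hc]
      simp
    rw [Finset.mem_Icc] at hi
    rw [Finset.mem_range] at hk
    have hlog : Nat.log 2 (i + k) ≤ L + 1 := by
      calc Nat.log 2 (i + k) ≤ Nat.log 2 (n * 2) := Nat.log_mono_right (by omega)
        _ = L + 1 := Nat.log_mul_base (by norm_num) (by omega)
    have hle : 2 ^ Nat.log 2 (i + k) ≤ i + k := Nat.pow_log_le_self 2 (by omega)
    refine Finset.mem_image.2 ⟨(Nat.log 2 (i + k), i + k - 2 ^ Nat.log 2 (i + k), k), ?_, ?_⟩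
    · simp only [Finset.mem_product, Finset.mem_range]
      omega
    · simp only
      omega
  have hle : ∀ a b : ℕ → Bool, (∀ i ∈ Finset.Icc 1 n, i ∉ B → ∀ k ∈ Finset.range w.length,
      a (i + k) = b (i + k)) → occCount a w n ≤ occCount b w n + B.card := by
    intro a b hab
    unfold occCount
    refine le_trans (Finset.card_le_card ?_) (Finset.card_union_le _ B)
    intro i hi
    rw [Finset.mem_filter] at hi
    rw [Finset.mem_union, Finset.mem_filter]
    by_cases hiB : i ∈ B
    · exact Or.inr hiB
    · left
      exact ⟨hi.1, fun k hk => by rw [← hab i hi.1 hiB k hk]; exact hi.2 k hk⟩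
  have e1 := hle _ _ hagree
  have e2 := hle _ _ (fun i hi hb k hk => (hagree i hi hb k hk).symm)
  have hBc : (B.card : ℝ) ≤ w.length * (6 * (L + 1 : ℝ) ^ 2) := by
    have : (B.card : ℝ) ≤ (L + 2) * ((2 * L + 3) * w.length) := by exact_mod_cast hB
    refine this.trans ?_
    have h0 : (0 : ℝ) ≤ w.length := by positivity
    have hL0 : (0 : ℝ) ≤ L := by positivity
    have : ((L : ℝ) + 2) * (2 * L + 3) ≤ 6 * (L + 1 : ℝ) ^ 2 := by nlinarith
    calc _ = (w.length : ℝ) * (((L : ℝ) + 2) * (2 * L + 3)) := by ring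
      _ ≤ _ := by gcongr
  have e1' : (occCount (auxY x) w n : ℝ) ≤ occCount x w n + B.card := by exact_mod_cast e1
  have e2' : (occCount x w n : ℝ) ≤ occCount (auxY x) w n + B.card := by exact_mod_cast e2
  rw [abs_le]
  constructor <;> linarith

lemma aux_log_lim : Tendsto (fun n : ℕ => (Nat.log 2 n + 1 : ℝ) ^ 2 / n) atTop (nhds 0) := by
  have h : ∀ p : ℕ, Tendsto (fun n : ℕ => (Real.log n) ^ p / (n : ℝ)) atTop (nhds 0) := fun p =>
    ((Real.isLittleO_pow_log_id_atTop (n := p)).tendsto_div_nhds_zero).comp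
      tendsto_natCast_atTop_atTop
  have hl2 : 0 < Real.log 2 := Real.log_pos (by norm_num)
  have hs := (((h 2).const_mul ((Real.log 2)⁻¹ ^ 2)).add ((h 1).const_mul (2 * (Real.log 2)⁻¹))).add
    (h 0)
  simp only [mul_zero, add_zero] at hs
  refine squeeze_zero' (Eventually.of_forall fun n => by positivity) ?_ hs
  filter_upwards [eventually_ge_atTop 1] with n hn
  have hnat : (Nat.log 2 n : ℝ) ≤ Real.log n * (Real.log 2)⁻¹ := by
    rw [← div_eq_mul_inv]
    exact Real.natLog_le_logb n 2
  calc (Nat.log 2 n + 1 : ℝ) ^ 2 / n ≤ (Real.log n * (Real.log 2)⁻¹ + 1) ^ 2 / n := by gcongr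
    _ = _ := by ring

lemma aux_normal (x : ℕ → Bool) (hx : NormalBaseTwo x) : NormalBaseTwo (auxY x) := by
  intro w hw
  have h1 := hx w hw
  have h2 : Tendsto (fun n : ℕ => ((occCount (auxY x) w n : ℝ) - occCount x w n) / n) atTop
      (nhds 0) := by
    rw [tendsto_zero_iff_abs_tendsto_zero]
    have hs := aux_log_lim.const_mul (w.length * 6 : ℝ)
    rw [mul_zero] at hs
    refine squeeze_zero' (Eventually.of_forall fun n => abs_nonneg _) ?_ hs
    filter_upwards [eventually_ge_atTop 1, eventually_ge_atTop w.length] with n hn hn2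
    simp only [Function.comp]
    rw [abs_div, Nat.abs_cast]
    calc _ ≤ w.length * (6 * (Nat.log 2 n + 1 : ℝ) ^ 2) / n := by
          gcongr
          exact aux_diff x w n hn2 hn
      _ = _ := by ring
  have h3 := h1.add h2
  rw [add_zero] at h3
  refine h3.congr fun n => ?_
  rw [← add_div]
  congr 1
  ring

/-- There is a binary sequence that is normal in base 2 but not typical:
`Normal ∖ TpcN ≠ ∅`. -/
theorem normal_not_typical_nonempty :
    ∃ x : ℕ → Bool, NormalBaseTwo x ∧ ¬ Typical x := by
  obtain ⟨x, hx⟩ := aux_exists_normal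
  exact ⟨auxY x, aux_normal x hx, aux_not_typical x⟩
end

section
/- There exists a continuous map φ : ℕ^ℕ → {0,1}^ℕ such that for every a ∈ ℕ^ℕ: (i) φ(a) is normal in base 2 if and only if a_{2n} → ∞ as n → ∞, and (ii) φ(a) is typical if and only if a_{2n−1} → ∞ as n → ∞. Consequently, with C = {a ∈ ℕ^ℕ : a_{2n} → ∞} and D = {a ∈ ℕ^ℕ : a_{2n−1} → ∞}, one has φ⁻¹(Normal ∖ TpcN) = C ∖ D and φ⁻¹(TpcN ∖ Normal) = D ∖ C. -/
open Filter

/-! Counting bit patterns among the integers below `Q`. -/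

/-- Indicator that bits `r, …, r+|w|-1` of `q` spell `w`. -/
noncomputable def bitInd (w : List Bool) (r q : ℕ) : ℝ :=
  if ∀ k ∈ Finset.range w.length, q.testBit (r + k) = w.getD k false then 1 else 0

lemma sum_even_odd (F : ℕ → ℝ) (Q : ℕ) :
    ∑ q ∈ Finset.range Q, F q = ∑ q ∈ Finset.range ((Q + 1) / 2), F (2 * q)
      + ∑ q ∈ Finset.range (Q / 2), F (2 * q + 1) := by
  induction Q with
  | zero => simp
  | succ n ih =>
    rw [Finset.sum_range_succ, ih]
    rcases Nat.even_or_odd' n with ⟨t, rfl | rfl⟩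
    · rw [show (2 * t + 1 + 1) / 2 = t + 1 by omega, show (2 * t + 1) / 2 = t by omega,
        show (2 * t) / 2 = t by omega, Finset.sum_range_succ]
      ring
    · rw [show (2 * t + 1 + 1 + 1) / 2 = t + 1 by omega, show (2 * t + 1 + 1) / 2 = t + 1 by omega,
        show (2 * t + 1) / 2 = t by omega, Finset.sum_range_succ _ t, Finset.sum_range_succ _ t]
      ring

lemma bitInd_succ_even (w : List Bool) (r q : ℕ) : bitInd w (r + 1) (2 * q) = bitInd w r q := by
  unfold bitInd
  have : ∀ k, (2 * q).testBit (r + 1 + k) = q.testBit (r + k) := by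
    intro k
    rw [show r + 1 + k = (r + k) + 1 by omega, Nat.testBit_succ]
    congr 1; omega
  simp only [this]

lemma bitInd_succ_odd (w : List Bool) (r q : ℕ) :
    bitInd w (r + 1) (2 * q + 1) = bitInd w r q := by
  unfold bitInd
  have : ∀ k, (2 * q + 1).testBit (r + 1 + k) = q.testBit (r + k) := by
    intro k
    rw [show r + 1 + k = (r + k) + 1 by omega, Nat.testBit_succ]
    congr 1; omega
  simp only [this]

lemma bitInd_cons (b : Bool) (w : List Bool) (q : ℕ) :
    bitInd (b :: w) 0 q = if q.testBit 0 = b then bitInd w 0 (q / 2) else 0 := by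
  unfold bitInd
  have : (∀ k ∈ Finset.range (b :: w).length, q.testBit (0 + k) = (b :: w).getD k false) ↔
      (q.testBit 0 = b ∧ ∀ k ∈ Finset.range w.length, (q / 2).testBit (0 + k) = w.getD k false) := by
    constructor
    · intro h
      refine ⟨by simpa using h 0 (by simp), fun k hk => ?_⟩
      have := h (k + 1) (by simpa using hk)
      simpa [Nat.testBit_succ] using this
    · rintro ⟨h0, h⟩ k hk
      rcases k with _ | k
      · simpa using h0
      · have := h k (by simpa using hk)
        simpa [Nat.testBit_succ] using this
  simp only [this]
  split_ifs <;> simp_all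

lemma bit_count_zero' (w : List Bool) (Q : ℕ) :
    |∑ q ∈ Finset.range Q, bitInd w 0 q - Q / 2 ^ w.length| ≤ 1 - 1 / 2 ^ w.length := by
  induction w generalizing Q with
  | nil => simp [bitInd]
  | cons b w ih =>
    rw [sum_even_odd]
    simp only [bitInd_cons, List.length_cons]
    have e1 : ∀ q, (2 * q) / 2 = q := by intro q; omega
    have e2 : ∀ q, (2 * q + 1) / 2 = q := by intro q; omega
    have key : ∀ t : ℕ, |2 * (t : ℝ) - Q| ≤ 1 →
        |∑ q ∈ Finset.range t, bitInd w 0 q - Q / 2 ^ (w.length + 1)|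
          ≤ 1 - 1 / 2 ^ (w.length + 1) := by
      intro t ht
      have h := ih t
      have hp : (0 : ℝ) < 1 / 2 ^ (w.length + 1) := by positivity
      have q1 : (1 : ℝ) / 2 ^ w.length = 2 * (1 / 2 ^ (w.length + 1)) := by
        rw [pow_succ]; field_simp
      have q2 : (t : ℝ) / 2 ^ w.length = 2 * t * (1 / 2 ^ (w.length + 1)) := by
        rw [pow_succ]; field_simp
      have q3 : (Q : ℝ) / 2 ^ (w.length + 1) = Q * (1 / 2 ^ (w.length + 1)) := by
        field_simp
      rw [q1, q2] at h
      rw [q3]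
      generalize (1 : ℝ) / 2 ^ (w.length + 1) = z at *
      rw [abs_le] at *
      constructor <;> nlinarith [h.1, h.2, ht.1, ht.2]
    cases b
    · simp only [Nat.testBit_zero, e1, e2]
      simp
      simp only [← one_div]
      apply key
      have : 2 * ((Q + 1) / 2) = Q ∨ 2 * ((Q + 1) / 2) = Q + 1 := by omega
      rcases this with h | h
      · have h' : (2 : ℝ) * ((Q + 1) / 2 : ℕ) = Q := by exact_mod_cast h
        rw [h']; simp
      · have h' : (2 : ℝ) * ((Q + 1) / 2 : ℕ) = Q + 1 := by exact_mod_cast h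
        rw [h']; simp
    · simp only [Nat.testBit_zero, e1, e2]
      simp
      simp only [← one_div]
      apply key
      have : 2 * (Q / 2) = Q ∨ 2 * (Q / 2) + 1 = Q := by omega
      rcases this with h | h
      · have h' : (2 : ℝ) * (Q / 2 : ℕ) = Q := by exact_mod_cast h
        rw [h']; simp
      · have h' : (2 : ℝ) * (Q / 2 : ℕ) + 1 = Q := by exact_mod_cast h
        rw [← h']; simp

lemma bit_count_zero (w : List Bool) (Q : ℕ) :
    |∑ q ∈ Finset.range Q, bitInd w 0 q - Q / 2 ^ w.length| ≤ 1 := by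
  have := bit_count_zero' w Q
  have hp : (0 : ℝ) < 1 / 2 ^ w.length := by positivity
  linarith

lemma bit_count (w : List Bool) (r Q : ℕ) :
    |∑ q ∈ Finset.range Q, bitInd w r q - Q / 2 ^ w.length| ≤ 2 ^ r := by
  induction r generalizing Q with
  | zero => simpa using bit_count_zero w Q
  | succ r ih =>
    rw [sum_even_odd]
    simp only [bitInd_succ_even, bitInd_succ_odd]
    have h1 := ih ((Q + 1) / 2)
    have h2 := ih (Q / 2)
    have hQ : (Q : ℝ) = ((Q + 1) / 2 : ℕ) + (Q / 2 : ℕ) := by norm_cast; omega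
    have : (Q : ℝ) / 2 ^ w.length = ((Q + 1) / 2 : ℕ) / 2 ^ w.length
      + (Q / 2 : ℕ) / 2 ^ w.length := by rw [← add_div, ← hQ]
    rw [this, pow_succ]
    rw [abs_le] at *
    constructor <;> linarith [h1.1, h1.2, h2.1, h2.2]

/-- Base filling: the integers written one after another with `m` bits each. -/
def baseSeq (m p : ℕ) : Bool := (p / m).testBit (p % m)

/-- The contents of the `k`-th dyadic stage. -/
def stg (b c k p : ℕ) : Bool :=
  if p = 0 then false
  else if p ≤ k + k / (b + 1) then true
  else if p ≤ 2 * k + 1 + 2 ^ k / (c + 2) then false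
  else baseSeq (k / 2) p

/-- The reduction. -/
def phi (a : ℕ → ℕ) (i : ℕ) : Bool :=
  stg (a (2 * Nat.log 2 i - 1)) (a (2 * Nat.log 2 i)) (Nat.log 2 i) (i - 2 ^ Nat.log 2 i)

lemma phi_stage (a : ℕ → ℕ) (k p : ℕ) (hp : p < 2 ^ k) :
    phi a (2 ^ k + p) = stg (a (2 * k - 1)) (a (2 * k)) k p := by
  have : Nat.log 2 (2 ^ k + p) = k :=
    Nat.log_eq_of_pow_le_of_lt_pow (by omega) (by rw [pow_succ]; omega)
  simp [phi, this]

lemma phi_continuous : Continuous phi := by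
  refine continuous_pi fun i => ?_
  have h : Continuous (fun a : ℕ → ℕ => (a (2 * Nat.log 2 i - 1), a (2 * Nat.log 2 i))) := by
    fun_prop
  exact (continuous_of_discreteTopology (f := fun y : ℕ × ℕ =>
    stg y.1 y.2 (Nat.log 2 i) (i - 2 ^ Nat.log 2 i))).comp h

/-- Indicator that `w` occurs in `x` at `i`. -/
noncomputable def occInd (x : ℕ → Bool) (w : List Bool) (i : ℕ) : ℝ :=
  if ∀ k ∈ Finset.range w.length, x (i + k) = w.getD k false then 1 else 0

lemma occInd_mem (x : ℕ → Bool) (w : List Bool) (i : ℕ) : 0 ≤ occInd x w i ∧ occInd x w i ≤ 1 := by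
  unfold occInd; split_ifs <;> norm_num

lemma occCount_eq (x : ℕ → Bool) (w : List Bool) (n : ℕ) :
    (occCount x w n : ℝ) = ∑ i ∈ Finset.Icc 1 n, occInd x w i := by
  unfold occCount occInd
  rw [Finset.card_filter]
  push_cast
  rfl

lemma occInd_base (w : List Bool) (m q r : ℕ) (h : r + w.length ≤ m) :
    occInd (baseSeq m) w (q * m + r) = bitInd w r q := by
  unfold occInd bitInd
  have : ∀ k ∈ Finset.range w.length, baseSeq m (q * m + r + k) = q.testBit (r + k) := by
    intro k hk
    have hk := Finset.mem_range.1 hk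
    have hm : 0 < m := by omega
    unfold baseSeq
    rw [show q * m + r + k = (r + k) + m * q by ring, Nat.add_mul_div_left _ _ hm,
      Nat.add_mul_mod_self_left, Nat.div_eq_of_lt (by omega), Nat.mod_eq_of_lt (by omega), zero_add]
  congr 1
  apply propext
  exact forall₂_congr fun k hk => by rw [this k hk]

lemma sum_range_mul' (f : ℕ → ℝ) (m Q : ℕ) :
    ∑ p ∈ Finset.range (Q * m), f p
      = ∑ r ∈ Finset.range m, ∑ q ∈ Finset.range Q, f (q * m + r) := by
  rw [Finset.sum_comm]
  induction Q with
  | zero => simp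
  | succ Q ih => rw [Nat.succ_mul, Finset.sum_range_add, ih, Finset.sum_range_succ]

lemma dev_abs (x : ℕ → Bool) (w : List Bool) (i : ℕ) :
    |occInd x w i - 1 / 2 ^ w.length| ≤ 1 := by
  have h1 : (0 : ℝ) < 1 / 2 ^ w.length := by positivity
  have h2 : (1 : ℝ) / 2 ^ w.length ≤ 1 := by
    rw [div_le_one (by positivity)]; exact one_le_pow₀ (by norm_num)
  have := occInd_mem x w i
  rw [abs_le]; constructor <;> linarith [this.1, this.2]

lemma base_sum (w : List Bool) (m N : ℕ) (hm : 0 < m) (hw : w.length ≤ m) :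
    |∑ p ∈ Finset.range N, (occInd (baseSeq m) w p - 1 / 2 ^ w.length)|
      ≤ m + m * 2 ^ m + w.length * (N / m) := by
  set h : ℕ → ℝ := fun p => occInd (baseSeq m) w p - 1 / 2 ^ w.length with hh
  have hN : N = (N / m) * m + N % m := by rw [mul_comm]; exact (Nat.div_add_mod N m).symm
  set Q := N / m with hQ
  have hQN : (Q : ℝ) ≤ N / m := Nat.cast_div_le
  have hs : N % m < m := Nat.mod_lt _ hm
  have hsplit : ∑ p ∈ Finset.range N, h p
      = ∑ r ∈ Finset.range m, ∑ q ∈ Finset.range Q, h (q * m + r)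
        + ∑ s ∈ Finset.range (N % m), h (Q * m + s) := by
    conv_lhs => rw [hN]
    rw [Finset.sum_range_add, sum_range_mul']
  rw [hsplit]
  have b2 : |∑ s ∈ Finset.range (N % m), h (Q * m + s)| ≤ m := by
    calc _ ≤ ∑ s ∈ Finset.range (N % m), |h (Q * m + s)| := Finset.abs_sum_le_sum_abs _ _
      _ ≤ ∑ s ∈ Finset.range (N % m), (1 : ℝ) := Finset.sum_le_sum fun s _ => dev_abs _ _ _
      _ = (N % m : ℕ) := by simp
      _ ≤ m := by exact_mod_cast hs.le
  have b1 : ∀ r ∈ Finset.range m, |∑ q ∈ Finset.range Q, h (q * m + r)|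
      ≤ 2 ^ m + if r + w.length ≤ m then 0 else (Q : ℝ) := by
    intro r hr
    have hr := Finset.mem_range.1 hr
    split_ifs with hc
    · have := bit_count w r Q
      have e : ∑ q ∈ Finset.range Q, h (q * m + r)
          = ∑ q ∈ Finset.range Q, bitInd w r q - Q / 2 ^ w.length := by
        simp only [hh, occInd_base w m _ r hc, Finset.sum_sub_distrib]
        simp; rfl
      rw [e]
      have : (2 : ℝ) ^ r ≤ 2 ^ m := pow_le_pow_right₀ (by norm_num) hr.le
      linarith
    · calc _ ≤ ∑ q ∈ Finset.range Q, |h (q * m + r)| := Finset.abs_sum_le_sum_abs _ _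
        _ ≤ ∑ q ∈ Finset.range Q, (1 : ℝ) := Finset.sum_le_sum fun s _ => dev_abs _ _ _
        _ = Q := by simp
        _ ≤ _ := by linarith [pow_pos (show (0 : ℝ) < 2 by norm_num) m]
  have b3 : |∑ r ∈ Finset.range m, ∑ q ∈ Finset.range Q, h (q * m + r)|
      ≤ m * 2 ^ m + w.length * Q := by
    refine (Finset.abs_sum_le_sum_abs _ _).trans ((Finset.sum_le_sum b1).trans ?_)
    rw [Finset.sum_add_distrib]
    have e1 : ∑ r ∈ Finset.range m, (2 : ℝ) ^ m = m * 2 ^ m := by simp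
    have e2 : ∑ r ∈ Finset.range m, (if r + w.length ≤ m then 0 else (Q : ℝ)) ≤ w.length * Q := by
      have : ∀ r, (if r + w.length ≤ m then 0 else (Q : ℝ))
          = if ¬ (r + w.length ≤ m) then (Q : ℝ) else 0 := by
        intro r; split_ifs <;> rfl
      simp only [this]
      rw [← Finset.sum_filter, Finset.sum_const, nsmul_eq_mul]
      gcongr
      calc _ ≤ (Finset.Ico (m - w.length) m).card := by
            apply Finset.card_le_card
            intro r hr
            simp only [Finset.mem_filter, Finset.mem_range, Finset.mem_Ico] at *
            omega
        _ ≤ w.length := by rw [Nat.card_Ico]; omega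
    linarith
  have b4 : (w.length : ℝ) * Q ≤ w.length * (N / m) := by gcongr
  have := abs_add_le (∑ r ∈ Finset.range m, ∑ q ∈ Finset.range Q, h (q * m + r))
    (∑ s ∈ Finset.range (N % m), h (Q * m + s))
  linarith

lemma stage_sum (a : ℕ → ℕ) (w : List Bool) (k N : ℕ) (hN : N ≤ 2 ^ k) (hk : 0 < k / 2)
    (hw : w.length ≤ k / 2) :
    |∑ p ∈ Finset.range N, (occInd (phi a) w (2 ^ k + p) - 1 / 2 ^ w.length)|
      ≤ ((k / 2 : ℕ) + (k / 2 : ℕ) * 2 ^ (k / 2) + w.length * (2 ^ k / (k / 2 : ℕ)))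
        + (2 * k + 2 + 2 ^ k / (a (2 * k) + 2) + w.length) := by
  have hb := base_sum w (k / 2) N hk hw
  have hNr : (N : ℝ) ≤ 2 ^ k := by exact_mod_cast hN
  have hb' : |∑ p ∈ Finset.range N, (occInd (baseSeq (k / 2)) w p - 1 / 2 ^ w.length)|
      ≤ (k / 2 : ℕ) + (k / 2 : ℕ) * 2 ^ (k / 2) + w.length * (2 ^ k / (k / 2 : ℕ)) := by
    refine hb.trans ?_
    gcongr
  set Z := 2 * k + 1 + 2 ^ k / (a (2 * k) + 2) with hZ
  have hsame : ∀ p, Z < p → p + w.length ≤ 2 ^ k →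
      occInd (phi a) w (2 ^ k + p) = occInd (baseSeq (k / 2)) w p := by
    intro p h1 h2
    unfold occInd
    congr 1
    apply propext
    refine forall₂_congr fun j hj => ?_
    have hj := Finset.mem_range.1 hj
    rw [show 2 ^ k + p + j = 2 ^ k + (p + j) by ring, phi_stage a k (p + j) (by omega)]
    have hd : k / (a (2 * k - 1) + 1) ≤ k := Nat.div_le_self _ _
    have hZ1 : 2 * k + 1 ≤ Z := Nat.le_add_right _ _
    have i1 : ¬ p + j ≤ Z := by omega
    have i2 : ¬ p + j ≤ k + k / (a (2 * k - 1) + 1) := by clear hZ; omega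
    have i3 : ¬ p + j = 0 := by clear hZ; omega
    unfold stg
    rw [if_neg i3, if_neg i2, if_neg i1]
  have hdiff : |∑ p ∈ Finset.range N, (occInd (phi a) w (2 ^ k + p) - 1 / 2 ^ w.length)
      - ∑ p ∈ Finset.range N, (occInd (baseSeq (k / 2)) w p - 1 / 2 ^ w.length)|
      ≤ Z + 1 + w.length := by
    rw [← Finset.sum_sub_distrib]
    have : ∀ p ∈ Finset.range N, |occInd (phi a) w (2 ^ k + p) - 1 / 2 ^ w.length
        - (occInd (baseSeq (k / 2)) w p - 1 / 2 ^ w.length)|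
        ≤ if p ≤ Z ∨ 2 ^ k < p + w.length then (1 : ℝ) else 0 := by
      intro p _
      split_ifs with hc
      · have h1 := occInd_mem (phi a) w (2 ^ k + p)
        have h2 := occInd_mem (baseSeq (k / 2)) w p
        rw [abs_le]; constructor <;> linarith [h1.1, h1.2, h2.1, h2.2]
      · push Not at hc
        rw [hsame p hc.1 hc.2]; simp
    refine (Finset.abs_sum_le_sum_abs _ _).trans ((Finset.sum_le_sum this).trans ?_)
    rw [← Finset.sum_filter, Finset.sum_const, nsmul_eq_mul, mul_one]
    have : ((Finset.range N).filter (fun p => p ≤ Z ∨ 2 ^ k < p + w.length)).card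
        ≤ Z + 1 + w.length := by
      calc _ ≤ (Finset.range (Z + 1) ∪ Finset.Ico (2 ^ k - w.length) (2 ^ k)).card := by
            apply Finset.card_le_card
            intro r hr
            simp only [Finset.mem_filter, Finset.mem_range, Finset.mem_Ico, Finset.mem_union] at *
            omega
        _ ≤ _ := Finset.card_union_le _ _
        _ ≤ _ := by
          simp only [Finset.card_range, Nat.card_Ico]; omega
    exact_mod_cast this
  have hZr : (Z : ℝ) ≤ 2 * k + 1 + 2 ^ k / (a (2 * k) + 2) := by
    have : ((2 ^ k / (a (2 * k) + 2) : ℕ) : ℝ) ≤ ((2 ^ k : ℕ) : ℝ) / ((a (2 * k) + 2 : ℕ) : ℝ) :=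
      Nat.cast_div_le
    rw [hZ]; push_cast at *; linarith
  rw [abs_le] at *
  constructor <;> linarith [hdiff.1, hdiff.2, hb'.1, hb'.2]

lemma phi_pow (a : ℕ → ℕ) (k : ℕ) : phi a (2 ^ k) = false := by
  have := phi_stage a k 0 (by positivity)
  simpa [stg] using this

/-- Summation over dyadic stages. -/
lemma dyadic_avg (g : ℕ → ℝ)
    (h : ∀ ε > 0, ∃ K, ∀ k ≥ K, ∀ N ≤ 2 ^ k,
      |∑ p ∈ Finset.range N, g (2 ^ k + p)| ≤ ε * 2 ^ k) :
    Tendsto (fun n : ℕ => (∑ i ∈ Finset.range (n + 1), g i) / (n : ℝ)) atTop (nhds 0) := by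
  rw [Metric.tendsto_atTop]
  intro ε hε
  obtain ⟨K, hK⟩ := h (ε / 4) (by positivity)
  set S : ℕ → ℝ := fun n => ∑ i ∈ Finset.range n, g i with hS
  have hstep : ∀ k ≥ K, ∀ N ≤ 2 ^ k, |S (2 ^ k + N)| ≤ |S (2 ^ k)| + ε / 4 * 2 ^ k := by
    intro k hk N hN
    have : S (2 ^ k + N) = S (2 ^ k) + ∑ p ∈ Finset.range N, g (2 ^ k + p) := by
      simp only [hS, Finset.sum_range_add]
    rw [this]
    exact (abs_add_le _ _).trans (by linarith [hK k hk N hN])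
  have hpow : ∀ k ≥ K, |S (2 ^ k)| ≤ |S (2 ^ K)| + ε / 4 * 2 ^ k := by
    intro k hk
    induction k, hk using Nat.le_induction with
    | base => have : (0 : ℝ) ≤ ε / 4 * 2 ^ K := by positivity
              linarith
    | succ k hk ih =>
      have := hstep k hk (2 ^ k) le_rfl
      rw [pow_succ, mul_two, pow_succ]
      linarith
  obtain ⟨M, hM⟩ := exists_nat_gt (4 * |S (2 ^ K)| / ε)
  refine ⟨max M (2 ^ K) + 1, fun n hn => ?_⟩
  have hn1 : M < n := by have := le_max_left M (2 ^ K); omega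
  have hn2 : 2 ^ K < n := by have := le_max_right M (2 ^ K); omega
  have hn0 : n ≠ 0 := by omega
  have hnr : (0 : ℝ) < n := by exact_mod_cast Nat.pos_of_ne_zero hn0
  have hk : K ≤ Nat.log 2 n := Nat.le_log_of_pow_le (by norm_num) hn2.le
  have l1 : 2 ^ Nat.log 2 n ≤ n := Nat.pow_log_le_self 2 hn0
  have l2 : n < 2 ^ (Nat.log 2 n + 1) := Nat.lt_pow_succ_log_self (by norm_num) n
  rw [pow_succ] at l2
  have h1 := hstep _ hk (n + 1 - 2 ^ Nat.log 2 n) (by omega)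
  rw [show 2 ^ Nat.log 2 n + (n + 1 - 2 ^ Nat.log 2 n) = n + 1 by omega] at h1
  have h2 := hpow _ hk
  have l1r : (2 : ℝ) ^ Nat.log 2 n ≤ n := by exact_mod_cast l1
  have hMr : 4 * |S (2 ^ K)| / ε < n := hM.trans (by exact_mod_cast hn1)
  rw [div_lt_iff₀ hε] at hMr
  rw [Real.dist_eq, sub_zero, abs_div, abs_of_pos hnr, div_lt_iff₀ hnr]
  have : ε / 4 * 2 ^ Nat.log 2 n ≤ ε / 4 * n := by gcongr
  calc _ = |S (n + 1)| := rfl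
    _ < ε * n := by nlinarith

lemma normal_of_tendsto (a : ℕ → ℕ) (ha : Tendsto (fun n : ℕ => a (2 * n)) atTop atTop) :
    NormalBaseTwo (phi a) := by
  intro w _
  set g : ℕ → ℝ := fun i => occInd (phi a) w i - 1 / 2 ^ w.length with hg
  have hmain : Tendsto (fun n : ℕ => (∑ i ∈ Finset.range (n + 1), g i) / (n : ℝ)) atTop (nhds 0) := by
    apply dyadic_avg
    intro ε hε
    -- the error terms
    have hhalf : Tendsto (fun k : ℕ => k / 2) atTop atTop :=
      Nat.tendsto_div_const_atTop (by norm_num)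
    have t1 : Tendsto (fun k : ℕ => (k : ℝ) / 2 ^ k) atTop (nhds 0) := by
      have := tendsto_pow_const_div_const_pow_of_one_lt 1 (show (1 : ℝ) < 2 by norm_num)
      simpa using this
    have t0 : Tendsto (fun k : ℕ => (1 : ℝ) / 2 ^ k) atTop (nhds 0) := by
      have := tendsto_pow_const_div_const_pow_of_one_lt 0 (show (1 : ℝ) < 2 by norm_num)
      simpa using this
    have t2 : Tendsto (fun k : ℕ => ((k / 2 : ℕ) : ℝ) / 2 ^ (k / 2)) atTop (nhds 0) :=
      t1.comp hhalf
    have t3 : Tendsto (fun k : ℕ => (1 : ℝ) / ((k / 2 : ℕ) : ℝ)) atTop (nhds 0) :=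
      tendsto_one_div_atTop_nhds_zero_nat.comp hhalf
    have t4 : Tendsto (fun k : ℕ => (1 : ℝ) / ((a (2 * k) : ℕ) : ℝ)) atTop (nhds 0) :=
      tendsto_one_div_atTop_nhds_zero_nat.comp ha
    have tt : Tendsto (fun k : ℕ => 3 * ((k : ℝ) / 2 ^ k) + (2 + w.length) * (1 / 2 ^ k)
        + ((k / 2 : ℕ) : ℝ) / 2 ^ (k / 2) + w.length * ((1 : ℝ) / ((k / 2 : ℕ) : ℝ))
        + (1 : ℝ) / ((a (2 * k) : ℕ) : ℝ)) atTop (nhds 0) := by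
      have := (((t1.const_mul 3).add (t0.const_mul (2 + (w.length : ℝ)))).add t2).add
        (t3.const_mul (w.length : ℝ)) |>.add t4
      simpa using this
    have ev := (tt.eventually (gt_mem_nhds hε)).and
      ((hhalf.eventually_ge_atTop (w.length + 1)).and (ha.eventually_ge_atTop 1))
    obtain ⟨K, hK⟩ := eventually_atTop.1 ev
    refine ⟨K, fun k hk N hN => ?_⟩
    obtain ⟨h1, h2, h3⟩ := hK k hk
    refine (stage_sum a w k N hN (by omega) (by omega)).trans ?_
    have hpk : (0 : ℝ) < 2 ^ k := by positivity
    refine le_trans ?_ (mul_le_mul_of_nonneg_right h1.le hpk.le)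
    have hA : (0 : ℝ) < (a (2 * k) : ℕ) := by exact_mod_cast h3
    have e1 : (k : ℝ) / 2 ^ k * 2 ^ k = k := by field_simp
    have e0 : (1 : ℝ) / 2 ^ k * 2 ^ k = 1 := by field_simp
    have e2 : ((k / 2 : ℕ) : ℝ) * 2 ^ (k / 2) ≤ ((k / 2 : ℕ) : ℝ) / 2 ^ (k / 2) * 2 ^ k := by
      have : (2 : ℝ) ^ (k / 2) * 2 ^ (k / 2) ≤ 2 ^ k := by
        rw [← pow_add]; exact pow_le_pow_right₀ (by norm_num) (by omega)
      calc ((k / 2 : ℕ) : ℝ) * 2 ^ (k / 2)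
          = ((k / 2 : ℕ) : ℝ) / 2 ^ (k / 2) * (2 ^ (k / 2) * 2 ^ (k / 2)) := by field_simp
        _ ≤ _ := by gcongr
    have e3 : (1 : ℝ) / ((k / 2 : ℕ) : ℝ) * 2 ^ k = 2 ^ k / ((k / 2 : ℕ) : ℝ) := by ring
    have e4 : (2 : ℝ) ^ k / (a (2 * k) + 2) ≤ (1 : ℝ) / ((a (2 * k) : ℕ) : ℝ) * 2 ^ k := by
      rw [one_div_mul_eq_div]; gcongr; linarith
    have e5 : ((k / 2 : ℕ) : ℝ) ≤ k := by exact_mod_cast Nat.div_le_self _ _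
    have exp : (3 * ((k : ℝ) / 2 ^ k) + (2 + w.length) * (1 / 2 ^ k)
        + ((k / 2 : ℕ) : ℝ) / 2 ^ (k / 2) + w.length * ((1 : ℝ) / ((k / 2 : ℕ) : ℝ))
        + (1 : ℝ) / ((a (2 * k) : ℕ) : ℝ)) * 2 ^ k
        = 3 * k + (2 + w.length) + ((k / 2 : ℕ) : ℝ) / 2 ^ (k / 2) * 2 ^ k
          + w.length * (2 ^ k / ((k / 2 : ℕ) : ℝ)) + (1 : ℝ) / ((a (2 * k) : ℕ) : ℝ) * 2 ^ k := by
      rw [add_mul, add_mul, add_mul, add_mul, mul_assoc, e1, mul_assoc, e0, mul_assoc, e3]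
      ring
    rw [exp]
    linarith
  have h0 : Tendsto (fun n : ℕ => g 0 / (n : ℝ)) atTop (nhds 0) :=
    tendsto_const_div_atTop_nhds_zero_nat _
  have := (hmain.sub h0).add_const ((1 : ℝ) / 2 ^ w.length)
  simp only [sub_zero, zero_add] at this
  refine this.congr' ?_
  filter_upwards [eventually_gt_atTop 0] with n hn
  have hnr : (n : ℝ) ≠ 0 := by exact_mod_cast hn.ne'
  rw [occCount_eq]
  have hs : ∑ i ∈ Finset.range (n + 1), g i = g 0 + ∑ i ∈ Finset.Icc 1 n, g i := by
    rw [Finset.range_eq_Ico, Finset.sum_eq_sum_Ico_succ_bot (by omega)]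
    congr 1
  have hs2 : ∑ i ∈ Finset.Icc 1 n, g i
      = ∑ i ∈ Finset.Icc 1 n, occInd (phi a) w i - n * (1 / 2 ^ w.length) := by
    simp only [hg, Finset.sum_sub_distrib]
    simp
  rw [hs, hs2]
  field_simp
  ring

lemma two_mul_lt_pow (k : ℕ) (hk : 6 ≤ k) : 4 * k + 4 < 2 ^ k := by
  induction k, hk using Nat.le_induction with
  | base => norm_num
  | succ k hk ih => rw [pow_succ]; omega

lemma not_tendsto_freq (f : ℕ → ℕ) (h : ¬ Tendsto f atTop atTop) :
    ∃ M, ∀ K, ∃ k ≥ K, f k ≤ M := by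
  rw [tendsto_atTop_atTop] at h
  push Not at h
  obtain ⟨M, hM⟩ := h
  exact ⟨M, fun K => let ⟨k, h1, h2⟩ := hM K; ⟨k, h1, h2.le⟩⟩

lemma tendsto_of_normal (a : ℕ → ℕ) (hn : NormalBaseTwo (phi a)) :
    Tendsto (fun n : ℕ => a (2 * n)) atTop atTop := by
  by_contra hcon
  obtain ⟨M, hM⟩ := not_tendsto_freq _ hcon
  have h := hn [true] (by simp)
  rw [Metric.tendsto_atTop] at h
  have hM0 : (0 : ℝ) < M + 2 := by positivity
  obtain ⟨n0, hn0⟩ := h (1 / (16 * (M + 2))) (by positivity)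
  obtain ⟨k, hk, hkM⟩ := hM (max n0 (2 * (M + 2) + 6))
  have hk1 : n0 ≤ k := (le_max_left _ _).trans hk
  have hk2 : 2 * (M + 2) + 6 ≤ k := (le_max_right _ _).trans hk
  have hp := two_mul_lt_pow k (by omega)
  have hkp : k < 2 ^ k := Nat.lt_two_pow_self
  obtain ⟨c, hc⟩ : ∃ c, c = a (2 * k) := ⟨_, rfl⟩
  obtain ⟨D, hD⟩ : ∃ D, D = 2 ^ k / (c + 2) := ⟨_, rfl⟩
  have hD2 : 2 * D ≤ 2 ^ k := by
    have h1 : D * (c + 2) ≤ 2 ^ k := hD ▸ Nat.div_mul_le_self _ _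
    nlinarith
  have hD1 : 2 ^ k < (D + 1) * (M + 2) := by
    have h1 : 2 ^ k < (c + 2) * (D + 1) := hD ▸ Nat.lt_mul_div_succ (2 ^ k) (by omega)
    have h2 : c ≤ M := hc ▸ hkM
    nlinarith
  have hfalse : ∀ p, 2 * k < p → p ≤ 2 * k + 1 + D → phi a (2 ^ k + p) = false := by
    intro p h1 h2
    have hd : k / (a (2 * k - 1) + 1) ≤ k := Nat.div_le_self _ _
    rw [phi_stage a k p (by clear hD; omega)]
    have i1 : p ≤ 2 * k + 1 + 2 ^ k / (a (2 * k) + 2) := by rw [← hc, ← hD]; exact h2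
    have i2 : ¬ p ≤ k + k / (a (2 * k - 1) + 1) := by clear hD i1; omega
    have i3 : ¬ p = 0 := by omega
    unfold stg
    rw [if_neg i3, if_neg i2, if_pos i1]
  set n1 := 2 ^ k + 2 * k with hn1
  set n2 := 2 ^ k + (2 * k + 1 + D) with hn2
  have hcount : occCount (phi a) [true] n2 = occCount (phi a) [true] n1 := by
    unfold occCount
    congr 1
    ext i
    simp only [Finset.mem_filter, Finset.mem_Icc, List.length_singleton, Finset.range_one,
      Finset.mem_singleton, forall_eq, add_zero, List.getD_cons_zero]
    constructor
    · rintro ⟨⟨h1, h2⟩, h3⟩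
      refine ⟨⟨h1, ?_⟩, h3⟩
      by_contra h4
      have := hfalse (i - 2 ^ k) (by clear hD; omega) (by clear hD; omega)
      rw [show 2 ^ k + (i - 2 ^ k) = i by clear hD; omega, h3] at this
      exact absurd this (by simp)
    · rintro ⟨⟨h1, h2⟩, h3⟩
      exact ⟨⟨h1, by clear hD; omega⟩, h3⟩
  have b1 := hn0 n1 (by clear hD; omega)
  have b2 := hn0 n2 (by clear hD; omega)
  rw [hcount] at b2
  have p1 : (0 : ℝ) < n1 := by
    have : 0 < n1 := by clear hD; omega
    exact_mod_cast this
  have p2 : (0 : ℝ) < n2 := by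
    have : 0 < n2 := by clear hD; omega
    exact_mod_cast this
  rw [Real.dist_eq, abs_lt] at b1 b2
  generalize (occCount (phi a) [true] n1 : ℝ) = T at *
  simp only [List.length_singleton, pow_one] at b1 b2
  have c1 : T < (1 / 2 + 1 / (16 * (M + 2))) * n1 := by
    rw [← div_lt_iff₀ p1]; linarith [b1.2]
  have c2 : (1 / 2 - 1 / (16 * (M + 2))) * n2 < T := by
    rw [← lt_div_iff₀ p2]; linarith [b2.1]
  have r1 : (n1 : ℝ) ≤ 2 * 2 ^ k := by
    have : n1 ≤ 2 * 2 ^ k := by clear hD; omega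
    exact_mod_cast this
  have r2 : (n2 : ℝ) ≤ 2 * 2 ^ k := by
    have : n2 ≤ 2 * 2 ^ k := by clear hD; omega
    exact_mod_cast this
  have r3 : (n2 : ℝ) = n1 + 1 + D := by
    have : n2 = n1 + 1 + D := by clear hD; omega
    exact_mod_cast this
  have r4 : (2 : ℝ) ^ k < (D + 1) * (M + 2) := by exact_mod_cast hD1
  -- combine
  have d1 : (1 / 2 : ℝ) * (D + 1) < 1 / (16 * (M + 2)) * (4 * 2 ^ k) := by
    have : 1 / (16 * ((M : ℝ) + 2)) * (n1 + n2) ≤ 1 / (16 * (M + 2)) * (4 * 2 ^ k) := by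
      gcongr; linarith
    generalize 1 / (16 * ((M : ℝ) + 2)) = e at *
    have c3 : (1 / 2 - e) * n2 < (1 / 2 + e) * n1 := c2.trans c1
    have c4 : 1 / 2 * ((n2 : ℝ) - n1) < e * (n1 + n2) := by linarith
    have c5 : (n2 : ℝ) - n1 = D + 1 := by rw [r3]; ring
    rw [c5] at c4
    linarith
  have d2 : 1 / (16 * ((M : ℝ) + 2)) * (4 * 2 ^ k) < 1 / (16 * (M + 2)) * (4 * ((D + 1) * (M + 2))) := by
    gcongr
  have d3 : 1 / (16 * ((M : ℝ) + 2)) * (4 * ((D + 1) * (M + 2))) = 1 / 4 * (D + 1) := by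
    field_simp; ring
  have : (0 : ℝ) ≤ D := by positivity
  linarith

lemma runL_spec (x : ℕ → Bool) (n : ℕ) :
    ∃ i, i + runL x n ≤ n ∧ ∀ k, 1 ≤ k → k ≤ runL x n → x (i + k) = true := by
  classical
  unfold runL
  have := @Nat.findGreatest_spec 0
    (fun j => ∃ i, i + j ≤ n ∧ ∀ k, 1 ≤ k → k ≤ j → x (i + k) = true)
    (fun _ => Classical.propDecidable _) n (Nat.zero_le _) ⟨0, by omega, fun k h1 h2 => by omega⟩
  exact this

lemma le_runL (x : ℕ → Bool) (n i j : ℕ) (h : i + j ≤ n)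
    (hx : ∀ k, 1 ≤ k → k ≤ j → x (i + k) = true) : j ≤ runL x n := by
  classical
  unfold runL
  exact Nat.le_findGreatest (by omega) ⟨i, h, hx⟩

lemma base_run (m p j : ℕ) (h : ∀ t < j, baseSeq m (p + t) = true) : j ≤ 2 * m := by
  by_contra hj
  push Not at hj
  rcases Nat.eq_zero_or_pos m with rfl | hm
  · have := h 0 (by omega)
    simp [baseSeq] at this
  · -- a multiple of `m` in the window
    obtain ⟨t, ht, q, hq⟩ : ∃ t ≤ m, ∃ q, p + t = m * q := by
      refine ⟨m - p % m, by omega, p / m + 1, ?_⟩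
      have h1 := Nat.div_add_mod p m
      have h2 := Nat.mod_lt p hm
      rw [Nat.mul_add]; omega
    have h1 := h t (by omega)
    have h2 := h (t + m) (by omega)
    rw [hq] at h1
    rw [← add_assoc, hq, ← Nat.mul_succ] at h2
    simp only [baseSeq, Nat.mul_mod_right, Nat.mul_div_cancel_left _ hm, Nat.testBit_zero,
      decide_eq_true_eq] at h1 h2
    omega

/-- Every run of ones in `phi a` below `n` is short. -/
lemma run_bound (a : ℕ → ℕ) (i j n : ℕ) (hj : 0 < j) (hn : i + j ≤ n)
    (h : ∀ k, 1 ≤ k → k ≤ j → phi a (i + k) = true) :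
    ∃ k, 2 ^ k ≤ n ∧ j ≤ k + k / (a (2 * k - 1) + 1) := by
  set k := Nat.log 2 (i + 1) with hk
  have l1 : 2 ^ k ≤ i + 1 := Nat.pow_log_le_self 2 (by omega)
  have l2 : i + 1 < 2 ^ (k + 1) := Nat.lt_pow_succ_log_self (by norm_num) _
  refine ⟨k, by omega, ?_⟩
  have l3 : i + j < 2 ^ (k + 1) := by
    by_contra hc
    have := h (2 ^ (k + 1) - i) (by omega) (by omega)
    rw [show i + (2 ^ (k + 1) - i) = 2 ^ (k + 1) by omega, phi_pow] at this
    exact absurd this (by simp)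
  rw [pow_succ] at l3
  obtain ⟨p, hp⟩ : ∃ p, i + 1 = 2 ^ k + p := ⟨i + 1 - 2 ^ k, by omega⟩
  have hs : ∀ t < j, stg (a (2 * k - 1)) (a (2 * k)) k (p + t) = true := by
    intro t ht
    rw [← phi_stage a k (p + t) (by omega), ← h (t + 1) (by omega) (by omega)]
    congr 1; omega
  generalize a (2 * k - 1) = b at *
  generalize a (2 * k) = c at *
  have hd : k / (b + 1) ≤ k := Nat.div_le_self _ _
  unfold stg at hs
  generalize k / (b + 1) = R at *
  generalize 2 ^ k / (c + 2) = D at *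
  by_cases hpR : p ≤ k + R
  · by_contra hc
    have hp0 : p ≠ 0 := by
      rintro rfl
      have := hs 0 hj
      simp at this
    have := hs (k + R + 1 - p) (by omega)
    rw [show p + (k + R + 1 - p) = k + R + 1 by omega, if_neg (by omega), if_neg (by omega),
      if_pos (by omega)] at this
    exact absurd this (by simp)
  · have hpD : ¬ p ≤ 2 * k + 1 + D := by
      intro hc
      have := hs 0 hj
      rw [if_neg (by omega), if_neg (by omega), if_pos (by omega)] at this
      exact absurd this (by simp)
    have := base_run (k / 2) p j (by
      intro t ht
      have := hs t ht
      rwa [if_neg (by omega), if_neg (by omega), if_neg (by omega)] at this)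
    omega

lemma plant (a : ℕ → ℕ) (k n R : ℕ) (hR : R ≤ k + k / (a (2 * k - 1) + 1)) (hk : R < 2 ^ k)
    (hn : 2 ^ k + R ≤ n) : R ≤ runL (phi a) n := by
  apply le_runL _ _ (2 ^ k) R hn
  intro t h1 h2
  rw [phi_stage a k t (by omega)]
  unfold stg
  rw [if_neg (by omega), if_pos (by omega)]

lemma tendsto_of_typical (a : ℕ → ℕ) (ht : Typical (phi a)) :
    Tendsto (fun n : ℕ => a (2 * n - 1)) atTop atTop := by
  by_contra hcon
  obtain ⟨M, hM⟩ := not_tendsto_freq _ hcon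
  unfold Typical at ht
  rw [Metric.tendsto_atTop] at ht
  have hM0 : (0 : ℝ) < M + 1 := by positivity
  obtain ⟨n0, hn0⟩ := ht (1 / (2 * (M + 1))) (by positivity)
  obtain ⟨k, hk, hkM⟩ := hM (max n0 (6 * (M + 1) + 6))
  have hk1 : n0 ≤ k := (le_max_left _ _).trans hk
  have hk2 : 6 * (M + 1) + 6 ≤ k := (le_max_right _ _).trans hk
  have hp := two_mul_lt_pow k (by omega)
  have hb := hn0 (2 ^ k + 2 * k) (by omega)
  obtain ⟨b, hbe⟩ : ∃ b, b = a (2 * k - 1) := ⟨_, rfl⟩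
  obtain ⟨R, hR⟩ : ∃ R, R = k / (b + 1) := ⟨_, rfl⟩
  have hRk : R ≤ k := hR ▸ Nat.div_le_self _ _
  have hR1 : k < (R + 1) * (M + 1) := by
    have h1 : k < (b + 1) * (R + 1) := hR ▸ Nat.lt_mul_div_succ k (by omega)
    have h2 : b ≤ M := hbe ▸ hkM
    nlinarith
  have hrun := plant a k (2 ^ k + 2 * k) (k + R) (by rw [← hbe, ← hR]) (by clear hR; omega)
    (by clear hR; omega)
  have hlogpos : 0 < Real.logb 2 ((2 ^ k + 2 * k : ℕ) : ℝ) := by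
    apply Real.logb_pos (by norm_num)
    have : 1 < 2 ^ k + 2 * k := by omega
    exact_mod_cast this
  have hlog : Real.logb 2 ((2 ^ k + 2 * k : ℕ) : ℝ) ≤ k + 1 := by
    rw [Real.logb_le_iff_le_rpow (by norm_num) (by positivity)]
    have : 2 ^ k + 2 * k ≤ 2 ^ (k + 1) := by rw [pow_succ]; omega
    have h2 : ((2 ^ k + 2 * k : ℕ) : ℝ) ≤ 2 ^ (k + 1) := by exact_mod_cast this
    refine h2.trans (le_of_eq ?_)
    rw [← Real.rpow_natCast]; push_cast; rfl
  rw [Real.dist_eq, abs_lt] at hb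
  have hb2 : (runL (phi a) (2 ^ k + 2 * k) : ℝ)
      < (1 + 1 / (2 * (M + 1))) * Real.logb 2 ((2 ^ k + 2 * k : ℕ) : ℝ) := by
    rw [← div_lt_iff₀ hlogpos]; linarith [hb.2]
  have hb3 : (1 + 1 / (2 * ((M : ℝ) + 1))) * Real.logb 2 ((2 ^ k + 2 * k : ℕ) : ℝ)
      ≤ (1 + 1 / (2 * (M + 1))) * (k + 1) := by gcongr
  have hr : (k : ℝ) + R ≤ runL (phi a) (2 ^ k + 2 * k) := by exact_mod_cast hrun
  have r1 : (k : ℝ) < (R + 1) * (M + 1) := by exact_mod_cast hR1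
  have r2 : 6 * ((M : ℝ) + 1) + 6 ≤ k := by exact_mod_cast hk2
  have key : (k : ℝ) + R < (1 + 1 / (2 * (M + 1))) * (k + 1) := by linarith
  have e : (1 + 1 / (2 * ((M : ℝ) + 1))) * (k + 1) * (2 * (M + 1)) = (2 * (M + 1) + 1) * (k + 1) := by
    field_simp
  have key2 : ((k : ℝ) + R) * (2 * (M + 1)) < (2 * (M + 1) + 1) * (k + 1) := by
    rw [← e]; gcongr
  have : (0 : ℝ) ≤ M := by positivity
  nlinarith

lemma typical_of_tendsto (a : ℕ → ℕ) (ha : Tendsto (fun n : ℕ => a (2 * n - 1)) atTop atTop) :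
    Typical (phi a) := by
  unfold Typical
  rw [Metric.tendsto_atTop]
  intro ε hε
  obtain ⟨M, hM⟩ := exists_nat_gt (2 / ε)
  obtain ⟨K, hK⟩ := eventually_atTop.1 (ha.eventually_ge_atTop M)
  obtain ⟨M2, hM2⟩ := exists_nat_gt (2 / ε)
  refine ⟨2 ^ (2 * K + M2 + 2), fun n hn => ?_⟩
  have hn0 : n ≠ 0 := by have : 0 < 2 ^ (2 * K + M2 + 2) := by positivity
                         omega
  set k := Nat.log 2 n with hkdef
  have hk : 2 * K + M2 + 2 ≤ k := Nat.le_log_of_pow_le (by norm_num) hn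
  have l1 : 2 ^ k ≤ n := Nat.pow_log_le_self 2 hn0
  have l2 : n < 2 ^ (k + 1) := Nat.lt_pow_succ_log_self (by norm_num) n
  have hnr : (0 : ℝ) < n := by exact_mod_cast Nat.pos_of_ne_zero hn0
  have g1 : (k : ℝ) ≤ Real.logb 2 n := by
    rw [Real.le_logb_iff_rpow_le (by norm_num) hnr, Real.rpow_natCast]
    exact_mod_cast l1
  have g2 : Real.logb 2 n ≤ k + 1 := by
    rw [Real.logb_le_iff_le_rpow (by norm_num) hnr]
    have h2 : (n : ℝ) ≤ 2 ^ (k + 1) := by exact_mod_cast l2.le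
    refine h2.trans (le_of_eq ?_)
    rw [← Real.rpow_natCast]; push_cast; rfl
  have hkr : (M2 : ℝ) + 2 ≤ k := by
    have : M2 + 2 ≤ k := by omega
    exact_mod_cast this
  have hM2' : 2 < M2 * ε := (div_lt_iff₀ hε).1 hM2
  have hkpos : (0 : ℝ) < k := by have : (0 : ℝ) ≤ M2 := by positivity
                                 linarith
  have hL : 0 < Real.logb 2 n := by linarith
  -- lower bound
  have lower : (k : ℝ) - 1 ≤ runL (phi a) n := by
    have hp : 2 ^ k = 2 * 2 ^ (k - 1) := by
      rw [← pow_succ']; congr 1; omega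
    have hlt : k - 1 < 2 ^ (k - 1) := Nat.lt_two_pow_self
    have := plant a (k - 1) n (k - 1) (Nat.le_add_right _ _) hlt (by omega)
    have h2 : k ≤ runL (phi a) n + 1 := by omega
    have h3 : (k : ℝ) ≤ runL (phi a) n + 1 := by exact_mod_cast h2
    linarith
  -- upper bound
  have upper : (runL (phi a) n : ℝ) ≤ k + ε / 2 * k := by
    obtain ⟨i, h1, h2⟩ := runL_spec (phi a) n
    rcases Nat.eq_zero_or_pos (runL (phi a) n) with h0 | h0
    · rw [h0]; push_cast; positivity
    obtain ⟨k', hk', hb⟩ := run_bound a i _ n h0 h1 h2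
    have hkk : k' ≤ k := Nat.le_log_of_pow_le (by norm_num) hk'
    by_cases hc : K ≤ k'
    · have hA := hK k' hc
      have q1 : ((k' / (a (2 * k' - 1) + 1) : ℕ) : ℝ) ≤ k' / ((a (2 * k' - 1) + 1 : ℕ) : ℝ) :=
        Nat.cast_div_le
      have q2 : (k' : ℝ) / ((a (2 * k' - 1) + 1 : ℕ) : ℝ) ≤ ε / 2 * k' := by
        rw [div_le_iff₀ (by positivity)]
        have hA' : (M : ℝ) ≤ ((a (2 * k' - 1) + 1 : ℕ) : ℝ) := by
          have : M ≤ a (2 * k' - 1) + 1 := by omega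
          exact_mod_cast this
        have hM' : 2 < M * ε := (div_lt_iff₀ hε).1 hM
        have : 1 ≤ ε / 2 * ((a (2 * k' - 1) + 1 : ℕ) : ℝ) := by nlinarith
        have hk0 : (0 : ℝ) ≤ k' := by positivity
        nlinarith
      have q3 : (k' : ℝ) ≤ k := by exact_mod_cast hkk
      have q4 : ε / 2 * k' ≤ ε / 2 * k := by gcongr
      have hb' : (runL (phi a) n : ℝ) ≤ k' + ((k' / (a (2 * k' - 1) + 1) : ℕ) : ℝ) := by
        exact_mod_cast hb
      linarith
    · have : k' / (a (2 * k' - 1) + 1) ≤ k' := Nat.div_le_self _ _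
      have h3 : runL (phi a) n ≤ k := by omega
      have h4 : (runL (phi a) n : ℝ) ≤ k := by exact_mod_cast h3
      have : 0 ≤ ε / 2 * k := by positivity
      linarith
  rw [Real.dist_eq, abs_lt]
  constructor
  · have : (1 - ε) * Real.logb 2 n < runL (phi a) n := by
      nlinarith
    have := (lt_div_iff₀ hL).2 this
    linarith
  · have : (runL (phi a) n : ℝ) < (1 + ε) * Real.logb 2 n := by nlinarith
    have := (div_lt_iff₀ hL).2 this
    linarith

/-- There is a continuous map `φ : ℕ^ℕ → {0,1}^ℕ` (product topologies of the
discrete ones) such that `φ a` is normal in base 2 iff the even-indexed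
subsequence `a_{2n} → ∞`, and `φ a` is typical iff the odd-indexed subsequence
`a_{2n−1} → ∞`. Consequently, with `C = {a : a_{2n} → ∞}` and
`D = {a : a_{2n−1} → ∞}`, `φ⁻¹(Normal ∖ TpcN) = C ∖ D` and
`φ⁻¹(TpcN ∖ Normal) = D ∖ C`. -/
theorem difference_reduction :
    ∃ φ : (ℕ → ℕ) → (ℕ → Bool), Continuous φ ∧
      (∀ a : ℕ → ℕ, NormalBaseTwo (φ a) ↔ Tendsto (fun n : ℕ => a (2 * n)) atTop atTop) ∧
      (∀ a : ℕ → ℕ, Typical (φ a) ↔ Tendsto (fun n : ℕ => a (2 * n - 1)) atTop atTop) ∧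
      φ ⁻¹' ({x : ℕ → Bool | NormalBaseTwo x} \ {x : ℕ → Bool | Typical x}) =
        {a : ℕ → ℕ | Tendsto (fun n : ℕ => a (2 * n)) atTop atTop} \
          {a : ℕ → ℕ | Tendsto (fun n : ℕ => a (2 * n - 1)) atTop atTop} ∧
      φ ⁻¹' ({x : ℕ → Bool | Typical x} \ {x : ℕ → Bool | NormalBaseTwo x}) =
        {a : ℕ → ℕ | Tendsto (fun n : ℕ => a (2 * n - 1)) atTop atTop} \
          {a : ℕ → ℕ | Tendsto (fun n : ℕ => a (2 * n)) atTop atTop} := by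
  refine ⟨phi, phi_continuous, ?_, ?_, ?_, ?_⟩
  · exact fun a => ⟨tendsto_of_normal a, normal_of_tendsto a⟩
  · exact fun a => ⟨tendsto_of_typical a, typical_of_tendsto a⟩
  · ext a
    have h1 : NormalBaseTwo (phi a) ↔ Tendsto (fun n : ℕ => a (2 * n)) atTop atTop :=
      ⟨tendsto_of_normal a, normal_of_tendsto a⟩
    have h2 : Typical (phi a) ↔ Tendsto (fun n : ℕ => a (2 * n - 1)) atTop atTop :=
      ⟨tendsto_of_typical a, typical_of_tendsto a⟩
    exact and_congr h1 (not_congr h2)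
  · ext a
    have h1 : NormalBaseTwo (phi a) ↔ Tendsto (fun n : ℕ => a (2 * n)) atTop atTop :=
      ⟨tendsto_of_normal a, normal_of_tendsto a⟩
    have h2 : Typical (phi a) ↔ Tendsto (fun n : ℕ => a (2 * n - 1)) atTop atTop :=
      ⟨tendsto_of_typical a, typical_of_tendsto a⟩
    exact and_congr h2 (not_congr h1)
end
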